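/- Suppose n ≥ 1 and r = 2. Then sup_{z ≥ 0} |P(F_2 ≤ z) − P(Y_1 ≤ z)| ≤ 0.9496/√n, i.e. the Kolmogorov distance between the law of F_2 and the chi-square distribution with 1 degree of freedom is at most 0.9496/√n. -/

import Mathlib

open MeasureTheory Finset Real

noncomputable section

instance instMSPerm (r : ℕ) : MeasurableSpace (Equiv.Perm (Fin r)) := ⊤

/-- The joint law of `n` independent uniformly random permutations of `{1, …, r}`:
the uniform probability measure on the finite product space. -/
def friedmanMeasure (n r : ℕ) : Measure (Fin n → Equiv.Perm (Fin r)) :=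
  (PMF.uniformOfFintype (Fin n → Equiv.Perm (Fin r))).toMeasure

/-- `ρ_i(j) = π_i(j) - (r+1)/2`, where `π_i(j) ∈ {1, …, r}` is the rank assigned by the
`i`-th permutation to treatment `j` (a permutation of `Fin r` assigns values in `{0, …, r-1}`,
hence the `+ 1`). -/
def rho (n r : ℕ) (i : Fin n) (j : Fin r) (ω : Fin n → Equiv.Perm (Fin r)) : ℝ :=
  ((ω i j : ℕ) : ℝ) + 1 - ((r : ℝ) + 1) / 2

/-- `S_j = (√12/√(r(r+1)n)) ∑_{i=1}^n ρ_i(j)`. -/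
def Sstat (n r : ℕ) (j : Fin r) (ω : Fin n → Equiv.Perm (Fin r)) : ℝ :=
  Real.sqrt 12 / Real.sqrt ((r : ℝ) * ((r : ℝ) + 1) * (n : ℝ)) * ∑ i, rho n r i j ω

/-- Friedman's statistic `F_r = ∑_{j=1}^r S_j²`. -/
def friedman (n r : ℕ) (ω : Fin n → Equiv.Perm (Fin r)) : ℝ :=
  ∑ j, (Sstat n r j ω) ^ 2

/-- The chi-square distribution with `p` degrees of freedom: the Gamma distribution
with shape `p/2` and rate `1/2`. -/
def chiSq (p : ℕ) : Measure ℝ := ProbabilityTheory.gammaMeasure ((p : ℝ) / 2) (1 / 2)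

end

/-- A function vanishing at `0` with nonnegative derivative on `[0, ∞)` is nonnegative there. -/
theorem nonneg_of_hasDerivAt_nonneg {f f' : ℝ → ℝ} (h0 : f 0 = 0)
    (hf : ∀ x, HasDerivAt f (f' x) x) (hf' : ∀ x, 0 ≤ x → 0 ≤ f' x) {x : ℝ} (hx : 0 ≤ x) :
    0 ≤ f x := by
  have hmono : MonotoneOn f (Set.Ici 0) := by
    refine monotoneOn_of_deriv_nonneg (convex_Ici 0)
      (fun y _ => (hf y).continuousAt.continuousWithinAt)
      (fun y _ => (hf y).differentiableAt.differentiableWithinAt) fun y hy => ?_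
    rw [interior_Ici] at hy
    rw [(hf y).deriv]
    exact hf' y (le_of_lt hy)
  simpa [h0] using hmono Set.self_mem_Ici hx hx

theorem cos_le_quartic {x : ℝ} (hx : 0 ≤ x) : cos x ≤ 1 - x ^ 2 / 2 + x ^ 4 / 24 := by
  have h := nonneg_of_hasDerivAt_nonneg (f := fun x => 1 - x ^ 2 / 2 + x ^ 4 / 24 - cos x)
    (f' := fun x => sin x - (x - x ^ 3 / 6)) (by simp)
    (fun x => by
      have := ((((hasDerivAt_pow 2 x).div_const 2).const_sub 1).add
        ((hasDerivAt_pow 4 x).div_const 24)).sub (hasDerivAt_cos x)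
      exact this.congr_deriv (by simp; ring))
    (fun x hx => sub_nonneg.2 (sin_ge_sub_cube hx)) hx
  simpa using h

theorem sin_le_quintic {x : ℝ} (hx : 0 ≤ x) : sin x ≤ x - x ^ 3 / 6 + x ^ 5 / 120 := by
  have h := nonneg_of_hasDerivAt_nonneg (f := fun x => x - x ^ 3 / 6 + x ^ 5 / 120 - sin x)
    (f' := fun x => 1 - x ^ 2 / 2 + x ^ 4 / 24 - cos x) (by simp)
    (fun x => by
      have := (((hasDerivAt_id x).sub ((hasDerivAt_pow 3 x).div_const 6)).add
        ((hasDerivAt_pow 5 x).div_const 120)).sub (hasDerivAt_sin x)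
      exact this.congr_deriv (by simp; ring))
    (fun x hx => sub_nonneg.2 (cos_le_quartic hx)) hx
  simpa using h

theorem sextic_le_cos {x : ℝ} (hx : 0 ≤ x) :
    1 - x ^ 2 / 2 + x ^ 4 / 24 - x ^ 6 / 720 ≤ cos x := by
  have h := nonneg_of_hasDerivAt_nonneg
    (f := fun x => cos x - (1 - x ^ 2 / 2 + x ^ 4 / 24 - x ^ 6 / 720))
    (f' := fun x => x - x ^ 3 / 6 + x ^ 5 / 120 - sin x) (by simp)
    (fun x => by
      have := (hasDerivAt_cos x).sub (((((hasDerivAt_pow 2 x).div_const 2).const_sub 1).add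
        ((hasDerivAt_pow 4 x).div_const 24)).sub ((hasDerivAt_pow 6 x).div_const 720))
      exact this.congr_deriv (by simp; ring))
    (fun x hx => sub_nonneg.2 (sin_le_quintic hx)) hx
  simpa using h

theorem septic_le_sin {x : ℝ} (hx : 0 ≤ x) :
    x - x ^ 3 / 6 + x ^ 5 / 120 - x ^ 7 / 5040 ≤ sin x := by
  have h := nonneg_of_hasDerivAt_nonneg
    (f := fun x => sin x - (x - x ^ 3 / 6 + x ^ 5 / 120 - x ^ 7 / 5040))
    (f' := fun x => cos x - (1 - x ^ 2 / 2 + x ^ 4 / 24 - x ^ 6 / 720)) (by simp)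
    (fun x => by
      have := (hasDerivAt_sin x).sub ((((hasDerivAt_id x).sub
        ((hasDerivAt_pow 3 x).div_const 6)).add
        ((hasDerivAt_pow 5 x).div_const 120)).sub ((hasDerivAt_pow 7 x).div_const 5040))
      exact this.congr_deriv (by simp; ring))
    (fun x hx => sub_nonneg.2 (sextic_le_cos hx)) hx
  simpa using h

theorem exp_neg_le_quadratic {x : ℝ} (hx : 0 ≤ x) : exp (-x) ≤ 1 - x + x ^ 2 / 2 := by
  have h := nonneg_of_hasDerivAt_nonneg (f := fun x => 1 - x + x ^ 2 / 2 - exp (-x))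
    (f' := fun x => exp (-x) - (1 - x)) (by simp)
    (fun x => by
      have := ((((hasDerivAt_id x).const_sub 1).add ((hasDerivAt_pow 2 x).div_const 2))).sub
        (hasDerivAt_neg x).exp
      exact this.congr_deriv (by simp; ring))
    (fun x _ => sub_nonneg.2 (one_sub_le_exp_neg x)) hx
  simpa using h

theorem cubic_le_exp_neg {x : ℝ} (hx : 0 ≤ x) : 1 - x + x ^ 2 / 2 - x ^ 3 / 6 ≤ exp (-x) := by
  have h := nonneg_of_hasDerivAt_nonneg
    (f := fun x => exp (-x) - (1 - x + x ^ 2 / 2 - x ^ 3 / 6))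
    (f' := fun x => 1 - x + x ^ 2 / 2 - exp (-x)) (by simp)
    (fun x => by
      have := (hasDerivAt_neg x).exp.sub (((((hasDerivAt_id x).const_sub 1).add
        ((hasDerivAt_pow 2 x).div_const 2))).sub ((hasDerivAt_pow 3 x).div_const 6))
      exact this.congr_deriv (by simp; ring))
    (fun x hx => sub_nonneg.2 (exp_neg_le_quadratic hx)) hx
  simpa using h

theorem sq_le_of_le_pi_div_two {t : ℝ} (h0 : 0 ≤ t) (h : t ≤ π / 2) : t ^ 2 ≤ 2.468 := by
  have := pi_lt_d6
  nlinarith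

theorem cos_le_exp_neg_sq_div_two {t : ℝ} (h0 : 0 ≤ t) (h : t ≤ π / 2) :
    cos t ≤ exp (-(t ^ 2 / 2)) := by
  have h1 := cubic_le_exp_neg (x := t ^ 2 / 2) (by positivity)
  have h2 := cos_le_quartic h0
  have h3 := sq_le_of_le_pi_div_two h0 h
  nlinarith [mul_nonneg (sq_nonneg (t ^ 2)) (by linarith : 0 ≤ 4 - t ^ 2)]

theorem exp_neg_sq_div_two_sub_cos_le {t : ℝ} (h0 : 0 ≤ t) (h : t ≤ π / 2) :
    exp (-(t ^ 2 / 2)) - cos t ≤ 7 / 80 * t ^ 4 := by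
  have h1 := exp_neg_le_quadratic (x := t ^ 2 / 2) (by positivity)
  have h2 := sextic_le_cos h0
  have h3 := sq_le_of_le_pi_div_two h0 h
  nlinarith [mul_nonneg (sq_nonneg (t ^ 2)) (by linarith : 0 ≤ 2.468 - t ^ 2)]

theorem inv_sin_sub_inv_le {t : ℝ} (h0 : 0 < t) (h : t ≤ π / 2) :
    1 / sin t - 1 / t ≤ t / 4 := by
  have hs : 0 < sin t := sin_pos_of_pos_of_lt_pi h0 (by linarith [pi_pos])
  have h3 := sq_le_of_le_pi_div_two h0.le h
  have h1 := septic_le_sin h0.le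
  have key : t ≤ sin t * (1 + t ^ 2 / 4) := by
    refine le_trans ?_ (mul_le_mul_of_nonneg_right h1 (by positivity))
    have h4 : 0 ≤ t ^ 3 * (1 / 12 - t ^ 2 / 30 + 19 / 10080 * t ^ 4 - t ^ 6 / 20160) := by
      refine mul_nonneg (by positivity) ?_
      set u := t ^ 2 with hu
      have e4 : t ^ 4 = u ^ 2 := by rw [hu]; ring
      have e6 : t ^ 6 = u ^ 3 := by rw [hu]; ring
      rw [e4, e6]
      have hu0 : 0 ≤ u := sq_nonneg t
      nlinarith [mul_nonneg (sq_nonneg u) (by linarith : 0 ≤ 2.468 - u), sq_nonneg (2.468 - u)]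
    linarith
  rw [div_sub_div _ _ hs.ne' h0.ne', div_le_div_iff₀ (by positivity) (by norm_num)]
  nlinarith

/-- On `(0, π/2]` the kernels `cosⁿ t / sin t` and `exp (-n t² / 2) / t` are close. -/
theorem abs_cos_pow_div_sin_sub_le (n : ℕ) {t : ℝ} (h0 : 0 < t) (h : t ≤ π / 2) :
    |cos t ^ (n + 1) / sin t - exp (-((n + 1) * t ^ 2 / 2)) / t| ≤
      1 / 4 * (t * exp (-((n + 1) * t ^ 2 / 2))) +
        7 / 80 * (n + 1) * (t ^ 3 * exp (-(n * t ^ 2 / 2))) := by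
  have hs : 0 < sin t := sin_pos_of_pos_of_lt_pi h0 (by linarith [pi_pos])
  have hc : 0 ≤ cos t := cos_nonneg_of_neg_pi_div_two_le_of_le (by linarith) h
  set e := exp (-(t ^ 2 / 2)) with he
  have he0 : 0 < e := exp_pos _
  have hce : cos t ≤ e := cos_le_exp_neg_sq_div_two h0.le h
  have e1 : exp (-((n + 1) * t ^ 2 / 2)) = e ^ (n + 1) := by
    rw [he, ← exp_nat_mul]; congr 1; push_cast; ring
  have e2 : exp (-(n * t ^ 2 / 2)) = e ^ n := by
    rw [he, ← exp_nat_mul]; congr 1; ring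
  rw [e1, e2]
  have hp : cos t ^ (n + 1) ≤ e ^ (n + 1) := by gcongr
  have hst : sin t ≤ t := sin_le h0.le
  have hU : cos t ^ (n + 1) / sin t - e ^ (n + 1) / t ≤ 1 / 4 * (t * e ^ (n + 1)) := by
    have h1 : cos t ^ (n + 1) / sin t ≤ e ^ (n + 1) / sin t := by gcongr
    have h2 := mul_le_mul_of_nonneg_left (inv_sin_sub_inv_le h0 h) (pow_nonneg he0.le (n + 1))
    rw [mul_sub, mul_one_div, mul_one_div] at h2
    linarith
  have hL : e ^ (n + 1) / t - cos t ^ (n + 1) / sin t ≤ 7 / 80 * (n + 1) * (t ^ 3 * e ^ n) := by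
    have h1 : cos t ^ (n + 1) / t ≤ cos t ^ (n + 1) / sin t := by gcongr
    have h2 : e ^ (n + 1) - cos t ^ (n + 1) ≤ (e - cos t) * (n + 1) * e ^ n := by
      have := abs_pow_sub_pow_le e (cos t) (n + 1)
      rw [abs_of_nonneg (sub_nonneg.2 hp), abs_of_nonneg (sub_nonneg.2 hce), abs_of_pos he0,
        abs_of_nonneg hc, max_eq_left hce] at this
      simpa using this
    have h3 : (e - cos t) * (n + 1) * e ^ n ≤ 7 / 80 * t ^ 4 * (n + 1) * e ^ n := by
      have := exp_neg_sq_div_two_sub_cos_le h0.le h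
      gcongr
    have h4 : e ^ (n + 1) / t - cos t ^ (n + 1) / t ≤ 7 / 80 * (n + 1) * (t ^ 3 * e ^ n) := by
      rw [← sub_div, div_le_iff₀ h0]
      nlinarith
    linarith
  have hA : 0 ≤ 1 / 4 * (t * e ^ (n + 1)) := by positivity
  have hB : 0 ≤ 7 / 80 * (n + 1) * (t ^ 3 * e ^ n) := by positivity
  rw [abs_le]
  constructor <;> linarith

theorem integral_mul_exp_neg {b : ℝ} (hb : 0 < b) :
    IntegrableOn (fun t => t * exp (-(b * t ^ 2 / 2))) (Set.Ioi 0) ∧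
      ∫ t in Set.Ioi (0 : ℝ), t * exp (-(b * t ^ 2 / 2)) = 1 / b := by
  have h2 : 0 < b / 2 := by positivity
  have e : ∀ t : ℝ, -(b / 2) * t ^ 2 = -(b * t ^ 2 / 2) := fun t => by ring
  have hi := integrableOn_rpow_mul_exp_neg_mul_sq h2 (s := 1) (by norm_num)
  have hv := integral_rpow_mul_exp_neg_mul_rpow (p := 2) (q := 1) (by norm_num) (by norm_num) h2
  simp only [rpow_one, rpow_two, e] at hi hv
  refine ⟨hi, hv.trans ?_⟩
  rw [show (-(1 + 1) / 2 : ℝ) = -1 by norm_num, show ((1 + 1) / 2 : ℝ) = 1 by norm_num, Gamma_one,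
    rpow_neg_one]
  field_simp

theorem integral_pow_three_mul_exp_neg {b : ℝ} (hb : 0 < b) :
    IntegrableOn (fun t => t ^ 3 * exp (-(b * t ^ 2 / 2))) (Set.Ioi 0) ∧
      ∫ t in Set.Ioi (0 : ℝ), t ^ 3 * exp (-(b * t ^ 2 / 2)) = 2 / b ^ 2 := by
  have h2 : 0 < b / 2 := by positivity
  have e : ∀ t : ℝ, -(b / 2) * t ^ 2 = -(b * t ^ 2 / 2) := fun t => by ring
  have e3 : ∀ t : ℝ, t ^ (3 : ℝ) = t ^ 3 := fun t => mod_cast rpow_natCast t 3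
  have hi := integrableOn_rpow_mul_exp_neg_mul_sq h2 (s := 3) (by norm_num)
  have hv := integral_rpow_mul_exp_neg_mul_rpow (p := 2) (q := 3) (by norm_num) (by norm_num) h2
  simp only [e3, rpow_two, e] at hi hv
  refine ⟨hi, hv.trans ?_⟩
  rw [show (-(3 + 1) / 2 : ℝ) = -(2 : ℝ) by norm_num, show ((3 + 1) / 2 : ℝ) = 2 by norm_num,
    Gamma_two, rpow_neg h2.le, rpow_two]
  field_simp

/-- `P(|N| ≤ x)` for a standard Gaussian variable `N` and `x ≥ 0`. -/
noncomputable def absGaussianCDF (x : ℝ) : ℝ := √(2 / π) * ∫ u in (0 : ℝ)..x, exp (-(u ^ 2 / 2))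

theorem hasDerivAt_absGaussianCDF (x : ℝ) :
    HasDerivAt absGaussianCDF (√(2 / π) * exp (-(x ^ 2 / 2))) x := by
  have hc : Continuous fun u : ℝ => exp (-(u ^ 2 / 2)) := by fun_prop
  exact ((intervalIntegral.integral_hasDerivAt_right (hc.intervalIntegrable _ _)
    (hc.stronglyMeasurableAtFilter _ _) hc.continuousAt).const_mul _)

theorem sqrt_two_div_pi_lt : √(2 / π) < 0.7979 := by
  rw [sqrt_lt' (by norm_num), div_lt_iff₀ pi_pos]
  have := pi_gt_d6
  nlinarith

theorem lt_sqrt_two_div_pi : 0.79 < √(2 / π) := by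
  rw [lt_sqrt (by norm_num), lt_div_iff₀ pi_pos]
  have := pi_lt_d6
  nlinarith

@[simp]
theorem absGaussianCDF_zero : absGaussianCDF 0 = 0 := by simp [absGaussianCDF]

theorem monotone_absGaussianCDF : Monotone absGaussianCDF :=
  monotone_of_hasDerivAt_nonneg hasDerivAt_absGaussianCDF fun x => by positivity

theorem abs_absGaussianCDF_sub_le (x y : ℝ) :
    |absGaussianCDF x - absGaussianCDF y| ≤ 0.7979 * |x - y| := by
  have := Convex.norm_image_sub_le_of_norm_hasDerivWithin_le (f := absGaussianCDF) (C := 0.7979)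
    (s := Set.univ) (x := y) (y := x) (fun z _ => (hasDerivAt_absGaussianCDF z).hasDerivWithinAt)
    (fun z _ => by
      rw [norm_of_nonneg (by positivity)]
      have h1 : exp (-(z ^ 2 / 2)) ≤ 1 := exp_le_one_iff.2 (by linarith [sq_nonneg z])
      nlinarith [sqrt_two_div_pi_lt, sqrt_nonneg (2 / π)]) convex_univ trivial trivial
  simpa using this

theorem cubic_le_absGaussianCDF {x : ℝ} (hx : 0 ≤ x) (hx1 : x ≤ 1) :
    0.79 * (x - x ^ 3 / 6) ≤ absGaussianCDF x := by
  have h := nonneg_of_hasDerivAt_nonneg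
    (f := fun x => absGaussianCDF x - √(2 / π) * (x - x ^ 3 / 6))
    (f' := fun x => √(2 / π) * exp (-(x ^ 2 / 2)) - √(2 / π) * (1 - x ^ 2 / 2)) (by simp)
    (fun x => by
      have := (hasDerivAt_absGaussianCDF x).sub
        (((hasDerivAt_id x).sub ((hasDerivAt_pow 3 x).div_const 6)).const_mul (√(2 / π)))
      exact this.congr_deriv (by push_cast; ring))
    (fun x _ => sub_nonneg.2 (by gcongr; exact one_sub_le_exp_neg _)) hx
  have h2 : 0 ≤ x - x ^ 3 / 6 := by nlinarith [mul_nonneg hx hx]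
  nlinarith [lt_sqrt_two_div_pi]

theorem chiSq_one_Iic {z : ℝ} (hz : 0 ≤ z) :
    ((chiSq 1) (Set.Iic z)).toReal = absGaussianCDF √z := by
  have hp : IsProbabilityMeasure (ProbabilityTheory.gammaMeasure (1 / 2) (1 / 2)) :=
    ProbabilityTheory.isProbabilityMeasure_gammaMeasure (by norm_num) (by norm_num)
  have h1 : ((chiSq 1) (Set.Iic z)).toReal =
      ∫ x in Set.Iic z, ProbabilityTheory.gammaPDFReal (1 / 2) (1 / 2) x := by
    rw [← ProbabilityTheory.cdf_gammaMeasure_eq_integral (by norm_num) (by norm_num),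
      ProbabilityTheory.cdf_eq_real, measureReal_def]
    simp [chiSq]
  have h2 : ∫ x in Set.Iic z, ProbabilityTheory.gammaPDFReal (1 / 2) (1 / 2) x =
      ∫ x in Set.Icc 0 z, ProbabilityTheory.gammaPDFReal (1 / 2) (1 / 2) x :=
    setIntegral_eq_of_subset_of_forall_sdiff_eq_zero measurableSet_Iic Set.Icc_subset_Iic_self
      fun x hx => if_neg fun h0 => hx.2 ⟨h0, hx.1⟩
  have hcont : Continuous fun x => absGaussianCDF √x :=
    (continuous_iff_continuousAt.2 fun x => (hasDerivAt_absGaussianCDF x).continuousAt).comp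
      continuous_sqrt
  have hderiv : ∀ x ∈ Set.Ioo 0 z, HasDerivAt (fun x => absGaussianCDF √x)
      (ProbabilityTheory.gammaPDFReal (1 / 2) (1 / 2) x) x := fun x hx => by
    have hx0 : 0 < x := hx.1
    refine ((hasDerivAt_absGaussianCDF _).comp x (hasDerivAt_sqrt hx0.ne')).congr_deriv ?_
    rw [ProbabilityTheory.gammaPDFReal, if_pos hx0.le, Gamma_one_half_eq, sq_sqrt hx0.le,
      ← sqrt_eq_rpow, show (1 / 2 - 1 : ℝ) = -(1 / 2) by norm_num, rpow_neg hx0.le,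
      ← sqrt_eq_rpow, sqrt_div (by norm_num), sqrt_div (by norm_num), sqrt_one,
      show 1 / 2 * x = x / 2 by ring]
    have := sqrt_pos.2 hx0
    have := sqrt_pos.2 pi_pos
    have h2 : √2 ^ 2 = (2 : ℝ) := sq_sqrt (by norm_num)
    field_simp
    rw [h2]
  have hint : IntervalIntegrable (ProbabilityTheory.gammaPDFReal (1 / 2) (1 / 2)) volume 0 z :=
    intervalIntegral.intervalIntegrable_deriv_of_nonneg hcont.continuousOn
      (by simpa [hz] using hderiv)
      fun x _ => ProbabilityTheory.gammaPDFReal_nonneg (by norm_num) (by norm_num) x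
  rw [h1, h2, integral_Icc_eq_integral_Ioc, ← intervalIntegral.integral_of_le hz,
    intervalIntegral.integral_eq_sub_of_hasDerivAt_of_le hz hcont.continuousOn hderiv hint]
  simp

theorem integral_cos_mul_exp_neg {b : ℝ} (hb : 0 < b) (x : ℝ) :
    ∫ t in Set.Ioi (0 : ℝ), cos (x * t) * exp (-(b * t ^ 2 / 2)) =
      √(2 * π / b) / 2 * exp (-(x ^ 2 / b / 2)) := by
  have hfull : ∫ t : ℝ, cos (x * t) * exp (-(b * t ^ 2 / 2)) =
      √(2 * π / b) * exp (-(x ^ 2 / b / 2)) := by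
    have hre : 0 < ((b / 2 : ℝ) : ℂ).re := by simpa using hb
    have h := fourierIntegral_gaussian hre (x : ℂ)
    have hsqrt : ((π : ℂ) / ((b / 2 : ℝ) : ℂ)) ^ (1 / 2 : ℂ) = ((√(2 * π / b) : ℝ) : ℂ) := by
      rw [sqrt_eq_rpow, Complex.ofReal_cpow (by positivity)]
      congr 1
      · push_cast; field_simp
      · norm_num
    have hexp : Complex.exp (-(x : ℂ) ^ 2 / (4 * ((b / 2 : ℝ) : ℂ))) =
        ((exp (-(x ^ 2 / b / 2)) : ℝ) : ℂ) := by
      rw [Complex.ofReal_exp]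
      congr 1
      push_cast; field_simp; norm_num
    rw [hsqrt, hexp, ← Complex.ofReal_mul] at h
    have hint : Integrable fun t : ℝ =>
        Complex.exp (Complex.I * x * t) * Complex.exp (-((b / 2 : ℝ) : ℂ) * t ^ 2) := by
      have := integrable_cexp_quadratic hre (Complex.I * x) 0
      refine this.congr (Filter.Eventually.of_forall fun t => ?_)
      simp only [← Complex.exp_add]
      congr 1; ring
    have h' := congrArg Complex.re h
    rw [Complex.ofReal_re, ← RCLike.re_eq_complex_re, ← integral_re hint] at h'
    rw [← h']
    refine integral_congr_ae (Filter.Eventually.of_forall fun t => ?_)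
    have e1 : Complex.I * x * t = ((x * t : ℝ) : ℂ) * Complex.I := by push_cast; ring
    have e2 : -((b / 2 : ℝ) : ℂ) * (t : ℂ) ^ 2 = ((-(b * t ^ 2 / 2) : ℝ) : ℂ) := by
      push_cast; ring
    simp only [e1, e2, ← Complex.ofReal_exp, RCLike.re_eq_complex_re, Complex.re_mul_ofReal,
      Complex.exp_ofReal_mul_I_re]
  have habs := integral_comp_abs (f := fun t => cos (x * t) * exp (-(b * t ^ 2 / 2)))
  have he : ∀ t : ℝ, cos (x * |t|) = cos (x * t) := fun t => by
    rcases abs_choice t with h | h <;> simp [h]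
  simp only [sq_abs, he] at habs
  linarith

/-- Inversion formula for the absolute value of a centred Gaussian variable of variance `b`. -/
theorem absGaussianCDF_div_sqrt_eq {b : ℝ} (hb : 0 < b) {y : ℝ} (hy : 0 ≤ y) :
    absGaussianCDF (y / √b) =
      2 / π * ∫ t in Set.Ioi (0 : ℝ), sin (y * t) * (exp (-(b * t ^ 2 / 2)) / t) := by
  have hswap : ∫ x in Set.Ioc 0 y, ∫ t in Set.Ioi (0 : ℝ), cos (x * t) * exp (-(b * t ^ 2 / 2)) =
      ∫ t in Set.Ioi (0 : ℝ), ∫ x in Set.Ioc 0 y, cos (x * t) * exp (-(b * t ^ 2 / 2)) := by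
    refine integral_integral_swap ?_
    have hg : Integrable (fun t : ℝ => exp (-(b * t ^ 2 / 2))) (volume.restrict (Set.Ioi 0)) := by
      refine ((integrable_exp_neg_mul_sq (half_pos hb)).integrableOn).congr
        (Filter.Eventually.of_forall fun t => ?_)
      simp only
      congr 1; ring
    have h1 : Integrable (fun _ : ℝ => (1 : ℝ)) (volume.restrict (Set.Ioc 0 y)) :=
      integrable_const 1
    refine (h1.mul_prod hg).mono' (by fun_prop) (Filter.Eventually.of_forall fun p => ?_)
    simp only [Function.uncurry, norm_mul, norm_eq_abs, abs_exp]
    gcongr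
    exact abs_cos_le_one _
  have hin : ∀ t ∈ Set.Ioi (0 : ℝ), ∫ x in Set.Ioc 0 y, cos (x * t) * exp (-(b * t ^ 2 / 2)) =
      sin (y * t) * (exp (-(b * t ^ 2 / 2)) / t) := fun t ht => by
    have ht0 : t ≠ 0 := ne_of_gt ht
    rw [integral_mul_const, ← intervalIntegral.integral_of_le hy,
      intervalIntegral.integral_comp_mul_right cos ht0, integral_cos]
    simp
    field_simp
  rw [← setIntegral_congr_fun measurableSet_Ioi hin, ← hswap]
  simp only [integral_cos_mul_exp_neg hb]
  rw [integral_const_mul, ← intervalIntegral.integral_of_le hy]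
  have hb' : 0 < √b := sqrt_pos.2 hb
  have hsub := intervalIntegral.integral_comp_div (a := 0) (b := y)
    (fun u => exp (-(u ^ 2 / 2))) hb'.ne'
  simp only [div_pow, sq_sqrt hb.le, zero_div, smul_eq_mul] at hsub
  rw [hsub, absGaussianCDF, sqrt_div (by positivity), sqrt_div (by positivity),
    sqrt_mul (by norm_num)]
  have h := sq_sqrt pi_pos.le
  have := sqrt_pos.2 pi_pos
  field_simp
  rw [h]
  ring

theorem integral_sin_odd_nat_mul_div_sin (k : ℕ) :
    IntegrableOn (fun t => sin ((2 * k + 1) * t) / sin t) (Set.Ioc 0 (π / 2)) ∧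
      ∫ t in Set.Ioc 0 (π / 2), sin ((2 * k + 1) * t) / sin t = π / 2 := by
  have hs : ∀ t ∈ Set.Ioc 0 (π / 2), sin t ≠ 0 := fun t ht =>
    (sin_pos_of_pos_of_lt_pi ht.1 (by linarith [ht.2, pi_pos])).ne'
  induction k with
  | zero =>
    have e : Set.EqOn (fun _ => (1 : ℝ)) (fun t => sin ((2 * (0 : ℕ) + 1) * t) / sin t)
        (Set.Ioc 0 (π / 2)) := fun t ht => by simp [hs t ht]
    refine ⟨IntegrableOn.congr_fun (by simp) e measurableSet_Ioc, ?_⟩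
    rw [← setIntegral_congr_fun measurableSet_Ioc e]
    simp
    positivity
  | succ k ih =>
    have e : Set.EqOn (fun t => sin ((2 * k + 1) * t) / sin t + 2 * cos (((2 * k + 2 : ℝ)) * t))
        (fun t => sin ((2 * (k + 1 : ℕ) + 1) * t) / sin t) (Set.Ioc 0 (π / 2)) := fun t ht => by
      have h1 : sin ((2 * (k + 1 : ℕ) + 1) * t) =
          sin ((2 * k + 1) * t) + 2 * cos ((2 * k + 2) * t) * sin t := by
        rw [show (2 * (k + 1 : ℕ) + 1) * t = (2 * k + 2) * t + t by push_cast; ring,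
          show (2 * k + 1) * t = (2 * k + 2) * t - t by ring, sin_add, sin_sub]
        ring
      simp only [h1]
      field_simp [hs t ht]
    have hc : IntegrableOn (fun t => 2 * cos ((2 * k + 2 : ℝ) * t)) (Set.Ioc 0 (π / 2)) :=
      Continuous.integrableOn_Ioc (by fun_prop)
    refine ⟨(ih.1.add hc).congr_fun e measurableSet_Ioc, ?_⟩
    rw [← setIntegral_congr_fun measurableSet_Ioc e, integral_add ih.1 hc, ih.2,
      integral_const_mul, ← intervalIntegral.integral_of_le (by positivity),
      intervalIntegral.integral_comp_mul_left cos (by positivity), integral_cos,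
      show (2 * k + 2) * (π / 2) = (k + 1 : ℕ) * π by push_cast; ring, sin_nat_mul_pi]
    simp

theorem integral_sin_odd_mul_div_sin {m : ℤ} (hm : Odd m) :
    IntegrableOn (fun t => sin (m * t) / sin t) (Set.Ioc 0 (π / 2)) ∧
      ∫ t in Set.Ioc 0 (π / 2), sin (m * t) / sin t = if 0 < m then π / 2 else -(π / 2) := by
  obtain ⟨k, rfl⟩ := hm
  obtain ⟨l, rfl | rfl⟩ : ∃ l : ℕ, k = l ∨ k = -(l + 1) := by
    rcases le_or_gt 0 k with h | h
    · exact ⟨k.toNat, by omega⟩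
    · exact ⟨(-k - 1).toNat, by omega⟩
  · have := integral_sin_odd_nat_mul_div_sin l
    rw [if_pos (by positivity)]
    exact_mod_cast this
  · have h := integral_sin_odd_nat_mul_div_sin l
    have e : (fun t => sin (((2 * -((l : ℤ) + 1) + 1 : ℤ) : ℝ) * t) / sin t) =
        fun t => -(sin ((2 * l + 1) * t) / sin t) := by
      funext t
      rw [← neg_div, ← sin_neg]
      congr 2; push_cast; ring
    rw [if_neg (by omega), e]
    exact ⟨h.1.neg, by rw [integral_neg, h.2]⟩

theorem integral_cos_mul_sin_div_sin {w y : ℤ} (hy : 0 ≤ y) (hwy : Odd (w + y)) :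
    IntegrableOn (fun t => cos (w * t) * (sin (y * t) / sin t)) (Set.Ioc 0 (π / 2)) ∧
      ∫ t in Set.Ioc 0 (π / 2), cos (w * t) * (sin (y * t) / sin t) =
        if |w| < y then π / 2 else 0 := by
  have h1 := integral_sin_odd_mul_div_sin hwy
  have hwy' : Odd (y - w) := by
    obtain ⟨k, hk⟩ := hwy
    exact ⟨k - w, by omega⟩
  have h2 := integral_sin_odd_mul_div_sin hwy'
  have e : (fun t => cos (w * t) * (sin (y * t) / sin t)) =
      fun t => 1 / 2 * (sin ((w + y : ℤ) * t) / sin t + sin ((y - w : ℤ) * t) / sin t) := by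
    funext t
    rw [← add_div, show ((w + y : ℤ) : ℝ) * t = y * t + w * t by push_cast; ring,
      show ((y - w : ℤ) : ℝ) * t = y * t - w * t by push_cast; ring, sin_add, sin_sub]
    ring
  rw [e]
  refine ⟨(h1.1.add h2.1).const_mul _, ?_⟩
  rw [integral_const_mul, integral_add h1.1 h2.1, h1.2, h2.2]
  obtain ⟨k, hk⟩ := hwy
  simp only [abs_lt]
  split_ifs <;> first | ring1 | (exfalso; omega)

/-- The sign `±1` of the centred rank given by a permutation of two elements. -/
def rankSign (σ : Equiv.Perm (Fin 2)) : ℤ := 2 * (σ 0 : ℕ) - 1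

/-- The simple random walk underlying Friedman's statistic for `r = 2`. -/
def rankWalk (n : ℕ) (ω : Fin n → Equiv.Perm (Fin 2)) : ℤ := ∑ i, rankSign (ω i)

theorem odd_rankSign (σ : Equiv.Perm (Fin 2)) : Odd (rankSign σ) :=
  ⟨(σ 0 : ℕ) - 1, by rw [rankSign]; ring⟩

theorem odd_rankWalk_add (n : ℕ) (ω : Fin n → Equiv.Perm (Fin 2)) {y : ℤ} (hy : Odd (n + y)) :
    Odd (rankWalk n ω + y) := by
  have h : Even (rankWalk n ω + n) := by
    have e : rankWalk n ω + n = ∑ i, (rankSign (ω i) + 1) := by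
      simp [rankWalk, sum_add_distrib]
    rw [e]
    exact even_sum _ fun i _ => (odd_rankSign _).add_one
  have := h.add_odd hy
  rw [show rankWalk n ω + n + (n + y) = rankWalk n ω + y + 2 * n by ring] at this
  simpa [Int.odd_add] using this

theorem sum_cos_rankWalk (n : ℕ) (t : ℝ) :
    ∑ ω, cos (rankWalk n ω * t) = 2 ^ n * cos t ^ n := by
  have h1 : ∑ σ, Complex.exp ((rankSign σ * t : ℝ) * Complex.I) = ((2 * cos t : ℝ) : ℂ) := by
    have hu : (univ : Finset (Equiv.Perm (Fin 2))) = {1, Equiv.swap 0 1} := by decide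
    rw [hu, sum_pair (by decide)]
    simp only [rankSign, Equiv.Perm.one_apply, Equiv.swap_apply_left]
    push_cast
    rw [Complex.two_cos]
    norm_num
    ring
  have h2 := Fintype.sum_pow (fun σ => Complex.exp ((rankSign σ * t : ℝ) * Complex.I)) n
  rw [h1] at h2
  have h3 := congrArg Complex.re h2
  rw [← Complex.ofReal_pow, Complex.ofReal_re, mul_pow, Complex.re_sum] at h3
  rw [h3]
  refine sum_congr rfl fun ω _ => ?_
  rw [← Complex.exp_sum, ← sum_mul, ← Complex.ofReal_sum, Complex.exp_ofReal_mul_I_re, ← sum_mul,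
    rankWalk, Int.cast_sum]

/-- Inversion formula for the walk: the law of `|W|` through its characteristic function. -/
theorem card_rankWalk_lt (n : ℕ) {y : ℤ} (hy : 0 ≤ y) (hny : Odd (n + y)) :
    IntegrableOn (fun t => sin (y * t) * (cos t ^ n / sin t)) (Set.Ioc 0 (π / 2)) ∧
      (#{ω | |rankWalk n ω| < y} : ℝ) / 2 ^ n =
        2 / π * ∫ t in Set.Ioc 0 (π / 2), sin (y * t) * (cos t ^ n / sin t) := by
  have h := fun ω => integral_cos_mul_sin_div_sin hy (odd_rankWalk_add n ω hny)
  have e : (fun t => sin (y * t) * (cos t ^ n / sin t)) =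
      fun t => (1 / 2 ^ n) * ∑ ω, cos (rankWalk n ω * t) * (sin (y * t) / sin t) := by
    funext t
    rw [← sum_mul, sum_cos_rankWalk]
    field_simp
  rw [e]
  refine ⟨(integrable_finsetSum _ fun ω _ => (h ω).1).const_mul _, ?_⟩
  rw [integral_const_mul, integral_finsetSum _ fun ω _ => (h ω).1]
  simp only [fun ω => (h ω).2]
  rw [← sum_filter, sum_const, nsmul_eq_mul]
  have := pi_pos
  field_simp

theorem abs_card_rankWalk_lt_sub_absGaussianCDF_le {n : ℕ} (hn : 4 ≤ n) {y : ℤ} (hy : 0 ≤ y)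
    (hny : Odd ((n + 1 : ℕ) + y)) :
    |(#{ω | |rankWalk (n + 1) ω| < y} : ℝ) / 2 ^ (n + 1) - absGaussianCDF (y / √(n + 1 : ℝ))| ≤
      2 / π * (1 / 4 * (1 / (n + 1)) + 7 / 80 * (n + 1) * (2 / n ^ 2)) := by
  have hn' : (4 : ℝ) ≤ n := mod_cast hn
  obtain ⟨hint, hcard⟩ := card_rankWalk_lt (n + 1) hy hny
  rw [hcard, absGaussianCDF_div_sqrt_eq (by positivity) (mod_cast hy), ← mul_sub, abs_mul,
    abs_of_pos (by positivity)]
  refine mul_le_mul_of_nonneg_left ?_ (by positivity)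
  set f₁ := fun t : ℝ => sin (y * t) * (cos t ^ (n + 1) / sin t) with hf₁
  set f₂ := fun t : ℝ => sin (y * t) * (exp (-((n + 1) * t ^ 2 / 2)) / t) with hf₂
  set S := Set.Ioc (0 : ℝ) (π / 2)
  have hm₁ := integral_mul_exp_neg (b := n + 1) (by positivity)
  have hm₂ := integral_pow_three_mul_exp_neg (b := n) (by positivity)
  have hM := (hm₁.1.const_mul (1 / 4)).add (hm₂.1.const_mul (7 / 80 * (n + 1)))
  have hbound : ∀ᵐ t ∂volume.restrict (Set.Ioi (0 : ℝ)), ‖S.indicator f₁ t - f₂ t‖ ≤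
      1 / 4 * (t * exp (-((n + 1) * t ^ 2 / 2))) +
        7 / 80 * (n + 1) * (t ^ 3 * exp (-(n * t ^ 2 / 2))) := by
    refine (ae_restrict_iff' measurableSet_Ioi).2 (Filter.Eventually.of_forall fun t ht => ?_)
    have ht0 : 0 < t := ht
    have hsin := abs_sin_le_one (y * t)
    by_cases hS : t ≤ π / 2
    · rw [Set.indicator_of_mem (show t ∈ S from ⟨ht0, hS⟩), hf₁, hf₂, ← mul_sub, norm_mul,
        norm_eq_abs, norm_eq_abs]
      exact (mul_le_of_le_one_left (abs_nonneg _) hsin).trans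
        (abs_cos_pow_div_sin_sub_le n ht0 hS)
    · rw [Set.indicator_of_notMem (fun h => hS h.2), zero_sub, norm_neg, hf₂, norm_mul,
        norm_eq_abs, norm_eq_abs, abs_of_pos (a := _ / t) (by positivity)]
      refine (mul_le_of_le_one_left (by positivity) hsin).trans ?_
      have h1 : exp (-((n + 1) * t ^ 2 / 2)) ≤ exp (-(n * t ^ 2 / 2)) := by
        gcongr; linarith
      have h2 : 2 ≤ t ^ 2 := by nlinarith [pi_gt_three]
      have h3 : 1 ≤ 7 / 80 * (n + 1) * t ^ 4 := by
        have : 4 ≤ t ^ 4 := by nlinarith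
        nlinarith
      have h4 : exp (-((n + 1) * t ^ 2 / 2)) / t ≤
          7 / 80 * (n + 1) * (t ^ 3 * exp (-(n * t ^ 2 / 2))) := by
        rw [div_le_iff₀ ht0]
        calc _ ≤ exp (-(n * t ^ 2 / 2)) := h1
          _ ≤ (7 / 80 * (n + 1) * t ^ 4) * exp (-(n * t ^ 2 / 2)) :=
            le_mul_of_one_le_left (exp_pos _).le h3
          _ = _ := by ring
      have h5 : 0 ≤ 1 / 4 * (t * exp (-((n + 1) * t ^ 2 / 2))) := by positivity
      linarith
  have hsub : S ⊆ Set.Ioi 0 := fun t ht => ht.1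
  have hi₁ : Integrable (S.indicator f₁) (volume.restrict (Set.Ioi 0)) :=
    (hint.integrable_indicator measurableSet_Ioc).restrict
  have hmeas : Measurable f₂ := by fun_prop
  have hd : Integrable (fun t => S.indicator f₁ t - f₂ t) (volume.restrict (Set.Ioi 0)) :=
    hM.mono' (hi₁.aestronglyMeasurable.sub hmeas.aestronglyMeasurable) hbound
  have hi₂ : Integrable f₂ (volume.restrict (Set.Ioi 0)) := by
    exact (hi₁.sub hd).congr (Filter.Eventually.of_forall fun t => by simp)
  have e₁ : ∫ t in S, f₁ t = ∫ t in Set.Ioi 0, S.indicator f₁ t := by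
    rw [setIntegral_indicator measurableSet_Ioc, Set.inter_eq_right.2 hsub]
  rw [e₁, ← integral_sub hi₁ hi₂, ← norm_eq_abs]
  refine (norm_integral_le_of_norm_le hM hbound).trans_eq ?_
  simp only [Pi.add_apply]
  rw [integral_add (hm₁.1.const_mul _) (hm₂.1.const_mul _), integral_const_mul,
    integral_const_mul, hm₁.2, hm₂.2]

theorem inversion_error_le {n : ℕ} (hn : 4 ≤ n) :
    2 / π * (1 / 4 * (1 / (n + 1)) + 7 / 80 * (n + 1) * (2 / n ^ 2)) ≤
      0.1517 / √(n + 1 : ℝ) := by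
  have hn' : (4 : ℝ) ≤ n := mod_cast hn
  set s := √(n + 1 : ℝ) with hs
  have hs2 : s ^ 2 = n + 1 := sq_sqrt (by positivity)
  have hs0 : 0 < s := sqrt_pos.2 (by positivity)
  have hs5 : 2.236 ≤ s := le_sqrt_of_sq_le (by norm_num; linarith)
  have h1 : 7 / 80 * (n + 1) * (2 / (n : ℝ) ^ 2) ≤ 35 / 128 / (n + 1) := by
    rw [← mul_div_assoc, div_le_div_iff₀ (by positivity) (by positivity)]
    nlinarith
  have h2 : 2 / π ≤ 0.6367 := by
    rw [div_le_iff₀ pi_pos]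
    nlinarith [pi_gt_d6]
  calc 2 / π * (1 / 4 * (1 / ((n : ℝ) + 1)) + 7 / 80 * (n + 1) * (2 / n ^ 2)) ≤
        0.6367 * (1 / 4 * (1 / ((n : ℝ) + 1)) + 35 / 128 / ((n : ℝ) + 1)) := by gcongr
    _ = 0.6367 * (67 / 128) / s ^ 2 := by rw [hs2]; ring
    _ ≤ _ := by
      rw [div_le_div_iff₀ (by positivity) hs0]
      nlinarith [mul_pos hs0 hs0]

instance : MeasurableSingletonClass (Equiv.Perm (Fin 2)) := ⟨fun _ => trivial⟩

theorem friedman_two_eq (n : ℕ) (ω : Fin n → Equiv.Perm (Fin 2)) :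
    friedman n 2 ω = (rankWalk n ω : ℝ) ^ 2 / n := by
  have h0 : ∀ i, rho n 2 i 0 ω = rankSign (ω i) / 2 := fun i => by
    rw [rho, rankSign]; push_cast; ring
  have h1 : ∀ i, rho n 2 i 1 ω = -(rankSign (ω i) / 2) := fun i => by
    have : ∀ σ : Equiv.Perm (Fin 2), ((σ 1 : ℕ) : ℤ) = 1 - (σ 0 : ℕ) := by decide
    have h := congrArg (Int.cast : ℤ → ℝ) (this (ω i))
    push_cast at h
    rw [rho, rankSign, h]; push_cast; ring
  rw [friedman, Fin.sum_univ_two, Sstat, Sstat]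
  simp only [h0, h1, sum_neg_distrib, ← sum_div]
  rw [rankWalk, mul_pow, mul_pow, div_pow, sq_sqrt (by norm_num), sq_sqrt (by positivity)]
  push_cast
  rcases eq_or_ne (n : ℝ) 0 with h | h
  · simp [h]
  · field_simp; ring

theorem friedmanMeasure_two_toReal (n : ℕ) (s : Set (Fin n → Equiv.Perm (Fin 2)))
    [DecidablePred (· ∈ s)] :
    (friedmanMeasure n 2 s).toReal = (#{ω | ω ∈ s} : ℝ) / 2 ^ n := by
  rw [friedmanMeasure, PMF.toMeasure_uniformOfFintype_apply _ s.toFinite.measurableSet]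
  simp [Fintype.card_subtype, Fintype.card_perm]

/-- The Friedman event is the event that the walk stays below an integer `y` of the parity
opposite to `n`, within distance one of `√(n z)`. -/
theorem exists_int_threshold {n : ℕ} (hn : 1 ≤ n) {z : ℝ} (hz : 0 ≤ z) :
    ∃ y : ℤ, 0 ≤ y ∧ Odd (n + y) ∧ |y - √(n * z)| ≤ 1 ∧
      ((friedmanMeasure n 2) {ω | friedman n 2 ω ≤ z}).toReal =
        (#{ω | |rankWalk n ω| < y} : ℝ) / 2 ^ n := by
  classical
  set x := √(n * z) with hx
  have hx0 : 0 ≤ x := sqrt_nonneg _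
  have hn0 : (0 : ℝ) < n := mod_cast hn
  obtain ⟨y, hy0, hodd, hy1, hy2⟩ : ∃ y : ℤ, 0 ≤ y ∧ Odd (n + y) ∧ (y : ℝ) - 1 ≤ x ∧ x < y + 1 := by
    have h1 := Int.floor_le x
    have h2 := Int.lt_floor_add_one x
    have h3 : 0 ≤ ⌊x⌋ := Int.floor_nonneg.2 hx0
    rcases Int.even_or_odd (n + ⌊x⌋) with h | h
    · exact ⟨⌊x⌋ + 1, by omega, by rw [← add_assoc]; exact h.add_one, by push_cast; linarith,
        by push_cast; linarith⟩
    · exact ⟨⌊x⌋, h3, h, by linarith, h2⟩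
  refine ⟨y, hy0, hodd, abs_le.2 ⟨by linarith, by linarith⟩, ?_⟩
  rw [friedmanMeasure_two_toReal]
  congr 3
  ext ω
  simp only [Set.mem_ofPred_eq, mem_filter, mem_univ, true_and]
  have hparity := odd_rankWalk_add n ω hodd
  rw [friedman_two_eq, div_le_iff₀ hn0, mul_comm z, ← sq_sqrt (by positivity : 0 ≤ n * z), ← hx,
    sq_le_sq, abs_of_nonneg hx0]
  constructor
  · intro h
    have h1 : ((|rankWalk n ω| : ℤ) : ℝ) < ((y + 1 : ℤ) : ℝ) := by push_cast; linarith
    have h2 : |rankWalk n ω| < y + 1 := by exact_mod_cast h1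
    obtain ⟨k, hk⟩ := hparity
    rcases abs_choice (rankWalk n ω) with h | h <;> omega
  · intro h
    have h1 : |rankWalk n ω| ≤ y - 1 := by omega
    have h2 : ((|rankWalk n ω| : ℤ) : ℝ) ≤ ((y - 1 : ℤ) : ℝ) := by exact_mod_cast h1
    push_cast at h2
    linarith

theorem absGaussianCDF_sqrt_mem_Icc {z : ℝ} (hz : 0 ≤ z) :
    absGaussianCDF √z ∈ Set.Icc 0 1 := by
  rw [← chiSq_one_Iic hz]
  have : IsProbabilityMeasure (chiSq 1) :=
    ProbabilityTheory.isProbabilityMeasure_gammaMeasure (by norm_num) (by norm_num)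
  exact ⟨ENNReal.toReal_nonneg, measureReal_le_one⟩

theorem abs_absGaussianCDF_div_sqrt_sub_le {n : ℕ} (hn : 1 ≤ n) {y z : ℝ}
    (hy : |y - √(n * z)| ≤ 1) :
    |absGaussianCDF (y / √n) - absGaussianCDF √z| ≤ 0.7979 / √n := by
  have hn0 : (0 : ℝ) < √n := sqrt_pos.2 (mod_cast hn)
  refine (abs_absGaussianCDF_sub_le _ _).trans ?_
  rw [sqrt_mul n.cast_nonneg] at hy
  rw [show y / √n - √z = (y - √n * √z) / √n by field_simp, abs_div, abs_of_pos hn0, div_eq_mul_inv,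
    div_eq_mul_inv]
  have := inv_pos.2 hn0
  nlinarith

theorem friedman_two_bound_of_five_le {n : ℕ} (hn : 5 ≤ n) {z : ℝ} (hz : 0 ≤ z) :
    |((friedmanMeasure n 2) {ω | friedman n 2 ω ≤ z}).toReal - absGaussianCDF √z| ≤
      0.9496 / √n := by
  obtain ⟨m, rfl⟩ : ∃ m, n = m + 1 := ⟨n - 1, by omega⟩
  obtain ⟨y, hy0, hodd, hy, hP⟩ := exists_int_threshold (by omega : 1 ≤ m + 1) hz
  rw [hP]
  have h1 := (abs_card_rankWalk_lt_sub_absGaussianCDF_le (by omega) hy0 hodd).trans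
    (inversion_error_le (n := m) (by omega))
  have h2 := abs_absGaussianCDF_div_sqrt_sub_le (by omega) hy
  push_cast at h2 ⊢
  refine (abs_sub_le _ _ _).trans ((add_le_add h1 h2).trans_eq ?_)
  rw [← add_div]
  norm_num

theorem abs_rankWalk_le (n : ℕ) (ω : Fin n → Equiv.Perm (Fin 2)) : |rankWalk n ω| ≤ n := by
  refine (abs_sum_le_sum_abs _ _).trans ?_
  have : ∀ σ, |rankSign σ| = 1 := by decide
  simp [this]

theorem card_rankWalk_lt_of_lt {n : ℕ} {y : ℤ} (hy : n < y) :
    (#{ω | |rankWalk n ω| < y} : ℝ) / 2 ^ n = 1 := by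
  rw [filter_true_of_mem fun ω _ => (abs_rankWalk_le n ω).trans_lt hy]
  simp [Fintype.card_perm]

theorem card_rankWalk_lt_zero (n : ℕ) : #{ω | |rankWalk n ω| < 0} = 0 := by
  simp [(abs_nonneg _).not_gt]

theorem friedman_two_bound_of_le_four {n : ℕ} (hn : 1 ≤ n) (hn4 : n ≤ 4) {z : ℝ} (hz : 0 ≤ z) :
    |((friedmanMeasure n 2) {ω | friedman n 2 ω ≤ z}).toReal - absGaussianCDF √z| ≤
      0.9496 / √n := by
  obtain ⟨y, hy0, hodd, hy, hP⟩ := exists_int_threshold hn hz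
  rw [hP]
  obtain ⟨hg0, hg1⟩ := absGaussianCDF_sqrt_mem_Icc hz
  have hs0 := sqrt_nonneg z
  have hlip : absGaussianCDF √z ≤ 0.7979 * √z := by
    have := (le_abs_self _).trans (abs_absGaussianCDF_sub_le √z 0)
    rwa [absGaussianCDF_zero, sub_zero, sub_zero, abs_of_nonneg hs0] at this
  have hone : 1 ≤ √z → 0.658 ≤ absGaussianCDF √z := fun h =>
    (by norm_num : (0.658 : ℝ) ≤ 0.79 * (1 - 1 ^ 3 / 6)).trans
      ((cubic_le_absGaussianCDF zero_le_one le_rfl).trans (monotone_absGaussianCDF h))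
  rw [sqrt_mul n.cast_nonneg, abs_le] at hy
  rcases lt_or_ge (n : ℤ) y with hny | hny
  · rw [card_rankWalk_lt_of_lt hny]
    have hn0 : (1 : ℝ) ≤ √n := one_le_sqrt.2 (mod_cast hn)
    have hsq : √(n : ℝ) * √n = n := mul_self_sqrt n.cast_nonneg
    have hn2 : √(n : ℝ) ≤ 2 := sqrt_le_iff.2 ⟨by norm_num, by norm_num; exact_mod_cast hn4⟩
    have hy' : (n : ℝ) + 1 ≤ y := by exact_mod_cast hny
    have h1 : 1 ≤ √z := by nlinarith
    have h2 : 0.4748 ≤ 0.9496 / √(n : ℝ) := by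
      rw [le_div_iff₀ (by linarith)]; linarith
    rw [abs_le]
    constructor <;> linarith [hone h1]
  · obtain ⟨k, hk⟩ := hodd
    interval_cases n
    · obtain rfl : y = 0 := by omega
      rw [card_rankWalk_lt_zero]
      norm_num at hy ⊢
      have : √z ≤ 1 := sqrt_le_iff.2 ⟨zero_le_one, by linarith [hy.1]⟩
      rw [abs_le]
      constructor <;> linarith
    · obtain rfl : y = 1 := by omega
      rw [show #{ω | |rankWalk 2 ω| < 1} = 2 by decide +kernel]
      have h2 : 0.6 ≤ 0.9496 / √((2 : ℕ) : ℝ) := by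
        rw [le_div_iff₀ (by positivity), ← le_div_iff₀' (by norm_num)]
        exact sqrt_le_iff.2 (by norm_num)
      rw [abs_le]
      constructor <;> norm_num at h2 ⊢ <;> linarith
    · have h3 : √((3 : ℕ) : ℝ) ≤ 1.7321 := sqrt_le_iff.2 (by norm_num)
      have h3' : 1.732 ≤ √((3 : ℕ) : ℝ) := le_sqrt_of_sq_le (by norm_num)
      have h2 : 0.548 ≤ 0.9496 / √((3 : ℕ) : ℝ) := by
        rw [le_div_iff₀ (by positivity)]; linarith
      refine le_trans ?_ h2
      obtain rfl | rfl : y = 0 ∨ y = 2 := by omega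
      · rw [card_rankWalk_lt_zero, abs_le]
        have : √z ≤ 0.578 := by
          have := hy.1
          push_cast at this h3'
          nlinarith
        constructor <;> norm_num <;> linarith
      · rw [show #{ω | |rankWalk 3 ω| < 2} = 6 by decide +kernel, abs_le]
        have h4 : 0.577 ≤ √z := by
          have := hy.2
          push_cast at this h3
          nlinarith
        have h5 := (cubic_le_absGaussianCDF (by norm_num) (by norm_num)).trans
          (monotone_absGaussianCDF h4)
        constructor <;> norm_num at h5 ⊢ <;> linarith
    · have h3 : √((4 : ℕ) : ℝ) = 2 := by
        rw [show ((4 : ℕ) : ℝ) = 2 ^ 2 by norm_num]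
        exact sqrt_sq (by norm_num)
      rw [h3] at hy ⊢
      obtain rfl | rfl : y = 1 ∨ y = 3 := by omega
      · rw [show #{ω | |rankWalk 4 ω| < 1} = 6 by decide +kernel, abs_le]
        norm_num at hy ⊢
        have : √z ≤ 1 := sqrt_le_iff.2 ⟨zero_le_one, by linarith [hy]⟩
        constructor <;> linarith
      · rw [show #{ω | |rankWalk 4 ω| < 3} = 14 by decide +kernel, abs_le]
        norm_num at hy ⊢
        have := hone (by linarith)
        constructor <;> linarith

/-- **Corollary 1.3, case `r = 2` (Gaunt–Reinert).** For `n ≥ 1`, the Kolmogorov distance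
between the law of `F_2` and the chi-square distribution with 1 degree of freedom is at most
`0.9496/√n`: for all `z ≥ 0`, `|P(F_2 ≤ z) − P(Y_1 ≤ z)| ≤ 0.9496/√n`. -/
theorem friedman_two_kolmogorov_bound (n : ℕ) (hn : 1 ≤ n) (z : ℝ) (hz : 0 ≤ z) :
    |((friedmanMeasure n 2) {ω | friedman n 2 ω ≤ z}).toReal
        - ((chiSq 1) (Set.Iic z)).toReal|
      ≤ 0.9496 / Real.sqrt n := by
  rw [chiSq_one_Iic hz]
  rcases le_or_gt n 4 with h | h
  · exact friedman_two_bound_of_le_four hn h hz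
  · exact friedman_two_bound_of_five_le h hz
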